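/- Let x = (S, Λ) be a combinatorial k-parameter with S a set of ordinals, let F be a regressive function on x which is finitary or simple, let b : Λ × ℕ → ℤ, and for each η̄ ∈ Λ and n ∈ ℕ let z_{η̄,n} be an element of the free abelian group on the generating set which is a ℤ-linear combination of generators x_{ν̄} with ν̄ ∈ F(η̄) ∖ Λ and generators y_{ν̄,n} with ν̄ ∈ F(η̄) ∩ Λ satisfying ν̄↾⟨m,n⟩ ∈ F(η̄) for all m ≤ k. Let G be the abelian group presented by generators {x_ν : ν ∈ Λ_0 ∪ … ∪ Λ_k} ∪ {y_{η̄,n} : η̄ ∈ Λ, n ∈ ℕ} and relations n!·y_{η̄,n+1} = y_{η̄,n} + b(η̄,n)·z_{η̄,n} + Σ_{m≤k} x_{η̄↾⟨m,n⟩} for each η̄ ∈ Λ and n ∈ ℕ. Then G is ℵ_{k+1}-free. -/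

import Mathlib

open Cardinal

namespace Sh883

/-- A "restricted tuple": the result of replacing the `m`-th coordinate of a `(k+1)`-tuple
of functions `ℕ → S` by a finite sequence (list) of elements of `S`, keeping the other
coordinates. -/
structure Res (k : ℕ) (S : Type u) where
  m : Fin (k + 1)
  seq : List S
  rest : (l : Fin (k + 1)) → l ≠ m → ℕ → S

/-- `η̄↾⟨m,n⟩` : replace the `m`-th coordinate of `η̄` by the finite sequence
`⟨η_m(0), …, η_m(n-1)⟩`. -/
def restrictAt {k : ℕ} {S : Type u} (η : Fin (k + 1) → ℕ → S) (m : Fin (k + 1)) (n : ℕ) :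
    Res k S :=
  ⟨m, List.ofFn fun i : Fin n => η m i, fun l _ => η l⟩

/-- `Λ_m = {η̄↾⟨m,n⟩ : η̄ ∈ Λ, n ∈ ℕ}`. -/
def LambdaResAt {k : ℕ} {S : Type u} (Λ : Set (Fin (k + 1) → ℕ → S)) (m : Fin (k + 1)) :
    Set (Res k S) :=
  {ν | ∃ η ∈ Λ, ∃ n : ℕ, ν = restrictAt η m n}

/-- `Λ_0 ∪ … ∪ Λ_k`. -/
def LambdaRes {k : ℕ} {S : Type u} (Λ : Set (Fin (k + 1) → ℕ → S)) : Set (Res k S) :=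
  ⋃ m, LambdaResAt Λ m

/-- Elements of `Λ ∪ Λ_0 ∪ … ∪ Λ_k`: either a full tuple or a restricted tuple.
Here `S` is a set of ordinals. -/
abbrev FullOrRes (k : ℕ) (Sset : Set Ordinal.{u}) : Type (u + 1) :=
  (Fin (k + 1) → ℕ → ↥Sset) ⊕ Res k ↥Sset

/-- The set of ordinal values of the `l`-th coordinate of a (full or restricted) tuple. -/
def coordVals {k : ℕ} {Sset : Set Ordinal.{u}} (w : FullOrRes k Sset) (l : Fin (k + 1)) :
    Set Ordinal.{u} :=
  match w with
  | Sum.inl ν => Set.range fun i : ℕ => (ν l i : Ordinal)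
  | Sum.inr ρ =>
      if h : l = ρ.m then {o : Ordinal | ∃ s ∈ ρ.seq, (s : Ordinal) = o}
      else Set.range fun i : ℕ => (ρ.rest l h i : Ordinal)

/-- `F` is a regressive function on the combinatorial `k`-parameter `(Sset, Λ)` (with
`Sset` a set of ordinals): `F` assigns to each `η̄ ∈ Λ` a countable subset of
`Λ ∪ Λ_0 ∪ … ∪ Λ_k` such that for all `ℓ ≤ k`,
`sup(range η_ℓ) > sup(⋃ {ℓ-th coordinate values of members of F(η̄)})`. -/
def Regressive {k : ℕ} {Sset : Set Ordinal.{u}} (Λ : Set (Fin (k + 1) → ℕ → ↥Sset))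
    (F : ↥Λ → Set (FullOrRes k Sset)) : Prop :=
  (∀ η : ↥Λ, (F η).Countable) ∧
    (∀ η : ↥Λ, ∀ w ∈ F η, Sum.elim (· ∈ Λ) (· ∈ LambdaRes Λ) w) ∧
    ∀ (η : ↥Λ) (l : Fin (k + 1)),
      sSup (⋃ w ∈ F η, coordVals w l) <
        ⨆ i : ℕ, (((η : Fin (k + 1) → ℕ → ↥Sset) l i : Ordinal))

/-- `F` is finitary: each `F(η̄)` is finite. -/
def Finitary {k : ℕ} {Sset : Set Ordinal.{u}} {Λ : Set (Fin (k + 1) → ℕ → ↥Sset)}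
    (F : ↥Λ → Set (FullOrRes k Sset)) : Prop :=
  ∀ η : ↥Λ, (F η).Finite

/-- `F` is simple: `F(η̄)` depends only on `η_k(0)`. -/
def Simple {k : ℕ} {Sset : Set Ordinal.{u}} {Λ : Set (Fin (k + 1) → ℕ → ↥Sset)}
    (F : ↥Λ → Set (FullOrRes k Sset)) : Prop :=
  ∀ η η' : ↥Λ,
    (η : Fin (k + 1) → ℕ → ↥Sset) (Fin.last k) 0 =
      (η' : Fin (k + 1) → ℕ → ↥Sset) (Fin.last k) 0 → F η = F η'

/-- `Λ'` is free for `(x, F)`: there are an enumeration `⟨η̄^α : α < α*⟩` of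
`Λ' ∪ ⋃{F(η̄) : η̄ ∈ Λ'}` and indices `⟨ℓ_α : α < α*⟩` such that (i) if `η̄^α ∈ Λ'` then
`F(η̄^α) ⊆ {η̄^β : β < α} ∪ {η̄^β↾⟨m,n⟩ : β < α, m ≤ k, n ∈ ℕ}`, and (ii) if
`η̄^α ∈ Λ'` then for some `n`,
`η̄^α↾⟨ℓ_α,n⟩ ∉ {η̄^β↾⟨ℓ_α,n⟩ : β < α, η̄^β ∈ Λ'} ∪ {η̄^β : β < α}`. -/
def FreeFor {k : ℕ} {Sset : Set Ordinal.{u}} (Λ : Set (Fin (k + 1) → ℕ → ↥Sset))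
    (F : ↥Λ → Set (FullOrRes k Sset)) (Λ' : Set (Fin (k + 1) → ℕ → ↥Sset)) : Prop :=
  ∃ (o : Ordinal.{u + 1}) (e : Set.Iio o → FullOrRes k Sset) (L : Set.Iio o → Fin (k + 1)),
    Function.Injective e ∧
    (Set.range e =
      Sum.inl '' Λ' ∪ ⋃ (η : ↥Λ) (_ : (η : Fin (k + 1) → ℕ → ↥Sset) ∈ Λ'), F η) ∧
    (∀ (α : Set.Iio o) (η : ↥Λ),
      e α = Sum.inl (η : Fin (k + 1) → ℕ → ↥Sset) → (η : Fin (k + 1) → ℕ → ↥Sset) ∈ Λ' →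
      F η ⊆ {w | ∃ β : Set.Iio o, (β : Ordinal) < (α : Ordinal) ∧
        (w = e β ∨ ∃ (ν : Fin (k + 1) → ℕ → ↥Sset) (m : Fin (k + 1)) (n : ℕ),
          e β = Sum.inl ν ∧ w = Sum.inr (restrictAt ν m n))}) ∧
    ∀ (α : Set.Iio o) (η : ↥Λ),
      e α = Sum.inl (η : Fin (k + 1) → ℕ → ↥Sset) → (η : Fin (k + 1) → ℕ → ↥Sset) ∈ Λ' →
      ∃ n : ℕ, ∀ β : Set.Iio o, (β : Ordinal) < (α : Ordinal) →
        e β ≠ Sum.inr (restrictAt (η : Fin (k + 1) → ℕ → ↥Sset) (L α) n) ∧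
        ∀ ν : Fin (k + 1) → ℕ → ↥Sset, e β = Sum.inl ν → ν ∈ Λ' →
          restrictAt (η : Fin (k + 1) → ℕ → ↥Sset) (L α) n ≠ restrictAt ν (L α) n

end Sh883

namespace Sh883

/-- The generators of the group of Definition k.21: `x_ν` for `ν ∈ Λ_0 ∪ … ∪ Λ_k` and
`y_{η̄,n}` for `η̄ ∈ Λ`, `n ∈ ℕ` (no `z` generator). -/
inductive Gen2 (k : ℕ) (Sset : Set Ordinal.{u}) (Λ : Set (Fin (k + 1) → ℕ → ↥Sset)) :
    Type (u + 1) where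
  | X : ↥(LambdaRes Λ) → Gen2 k Sset Λ
  | Y : ↥Λ → ℕ → Gen2 k Sset Λ

/-- `η̄↾⟨m,n⟩` as an element of `Λ_0 ∪ … ∪ Λ_k`, for `η̄ ∈ Λ`. -/
def resMem {k : ℕ} {S : Type v} {Λ : Set (Fin (k + 1) → ℕ → S)} (η : ↥Λ) (m : Fin (k + 1))
    (n : ℕ) : ↥(LambdaRes Λ) :=
  ⟨restrictAt (η : Fin (k + 1) → ℕ → S) m n, Set.mem_iUnion.2 ⟨m, (η : _), η.2, n, rfl⟩⟩

/-- The subgroup of the free abelian group on the generators consisting of the ℤ-linear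
combinations of the generators `x_{ν̄}` with `ν̄ ∈ F(η̄) ∖ Λ` and `y_{ν̄,n}` with
`ν̄ ∈ F(η̄) ∩ Λ` satisfying `ν̄↾⟨m,n⟩ ∈ F(η̄)` for all `m ≤ k`. -/
def zSpan {k : ℕ} {Sset : Set Ordinal.{u}} {Λ : Set (Fin (k + 1) → ℕ → ↥Sset)}
    (F : ↥Λ → Set (FullOrRes k Sset)) (η : ↥Λ) (n : ℕ) :
    AddSubgroup (FreeAbelianGroup (Gen2 k Sset Λ)) :=
  AddSubgroup.closure
    ({g | ∃ ρ : ↥(LambdaRes Λ), Sum.inr (ρ : Res k ↥Sset) ∈ F η ∧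
        g = FreeAbelianGroup.of (Gen2.X ρ)}
      ∪ {g | ∃ ν : ↥Λ, Sum.inl ((ν : Fin (k + 1) → ℕ → ↥Sset)) ∈ F η ∧
          (∀ m : Fin (k + 1),
            Sum.inr (restrictAt (ν : Fin (k + 1) → ℕ → ↥Sset) m n) ∈ F η) ∧
          g = FreeAbelianGroup.of (Gen2.Y ν n)})

/-- The subgroup of relations
`n!·y_{η̄,n+1} − y_{η̄,n} − b(η̄,n)·z_{η̄,n} − Σ_{m≤k} x_{η̄↾⟨m,n⟩}`. -/
def relSub2 {k : ℕ} {Sset : Set Ordinal.{u}} {Λ : Set (Fin (k + 1) → ℕ → ↥Sset)}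
    (b : ↥Λ → ℕ → ℤ) (z : ↥Λ → ℕ → FreeAbelianGroup (Gen2 k Sset Λ)) :
    AddSubgroup (FreeAbelianGroup (Gen2 k Sset Λ)) :=
  AddSubgroup.closure {g | ∃ (η : ↥Λ) (n : ℕ),
    g = (n.factorial : ℤ) • FreeAbelianGroup.of (Gen2.Y η (n + 1))
        - FreeAbelianGroup.of (Gen2.Y η n)
        - b η n • z η n
        - ∑ m : Fin (k + 1), FreeAbelianGroup.of (Gen2.X (resMem η m n))}

end Sh883

/-!
Only the tuples `η̄` of a set `Λ'` of cardinality at most `ℵ_k`, closed under the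
dependencies given by `F`, matter for a subgroup of cardinality less than `ℵ_{k+1}`. Such a
`Λ'` carries a well-ordering and coordinates `ℓ η̄` for which `η̄↾⟨ℓ η̄, n⟩` is, for all
large `n`, shared with no earlier tuple and absent from `F(η̄')` for `η̄'` equal to `η̄` or
earlier. In the finitary case this is an induction on `j` for sets of cardinality at most
`ℵ_j`: filter the coordinates `ℕ → S` by small sets closed under `F` and sort the tuples by
the first stage that contains all their coordinates. The coordinate that appears last tells
tuples of different stages apart, so each stage is handled by the induction hypothesis with
one fewer admissible coordinate, and `k + 1` coordinates suffice for `ℵ_k`. In the simple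
case, tuples with the same `sup` of dependencies do not depend on each other, so the
previous argument applies to each such block without dependencies.

Eliminating `x_{η̄↾⟨ℓ η̄, n⟩}` for large `n` and `y_{η̄,n}` for the remaining `n`, both with
coefficient `-1`, puts the relations of `Λ'` into triangular form. The relations of the
other tuples, with pivots `y_{η̄,n+1}`, keep the whole system triangular, so the generators
that are not pivots are linearly independent, and their span contains the given subgroup.
-/

namespace Sh883

section Triangular

variable {R I X W : Type*}

/-- A family of vectors is triangular with respect to pivot coordinates `p` and ranks `μ` if every
vector is nonzero at its own pivot and vanishes at the pivots of all other vectors of no smaller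
rank. -/
structure IsTriangular [Zero R] [LT W] (v : I → X →₀ R) (p : I → X) (μ : I → W) : Prop where
  apply_pivot_ne_zero : ∀ i, v i (p i) ≠ 0
  eq_or_rank_lt : ∀ i j, v i (p j) ≠ 0 → j = i ∨ μ j < μ i

namespace IsTriangular

variable [CommRing R] [IsDomain R] [LinearOrder W] {v : I → X →₀ R} {p : I → X} {μ : I → W}

theorem exists_linearCombination_apply_ne_zero (hv : IsTriangular v p μ) {l : I →₀ R}
    (hl : l ≠ 0) : ∃ i, Finsupp.linearCombination R v l (p i) ≠ 0 := by
  obtain ⟨i, hi, hmax⟩ := l.support.exists_max_image μ (Finsupp.support_nonempty_iff.2 hl)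
  have hother : ∀ j ∈ l.support, j ≠ i → l j * v j (p i) = 0 := fun j hj hji => by
    by_contra h
    rcases hv.eq_or_rank_lt j i (right_ne_zero_of_mul h) with rfl | hlt
    exacts [hji rfl, (hmax j hj).not_gt hlt]
  have hcoeff : Finsupp.linearCombination R v l (p i) = l i * v i (p i) := by
    rw [Finsupp.linearCombination_apply, Finsupp.sum, Finsupp.finsetSum_apply]
    simp only [Finsupp.smul_apply, smul_eq_mul]
    exact Finset.sum_eq_single_of_mem i hi hother
  exact ⟨i, hcoeff ▸ mul_ne_zero (Finsupp.mem_support_iff.1 hi) (hv.apply_pivot_ne_zero i)⟩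

theorem linearIndependent (hv : IsTriangular v p μ) : LinearIndependent R v := by
  refine linearIndependent_iff.2 fun l hl => by_contra fun hne => ?_
  obtain ⟨i, hi⟩ := hv.exists_linearCombination_apply_ne_zero hne
  exact hi (by rw [hl, Finsupp.zero_apply])

end IsTriangular

end Triangular

section SubmodulesOfFreeModules

variable {R ι : Type*} [CommRing R]

section LeadingCoefficients

variable [LinearOrder ι] {N : Submodule R (ι →₀ R)}

/-- The ideal of coefficients at `i` of those members of `N` that are supported on `Set.Iic i`. -/
noncomputable def leadingIdeal (N : Submodule R (ι →₀ R)) (i : ι) : Ideal R :=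
  (N ⊓ Finsupp.supported R R (Set.Iic i)).map (Finsupp.lapply i)

theorem exists_mem_support_mem_supported_Iic {g : ι →₀ R} (hg : g ≠ 0) :
    ∃ i ∈ g.support, g ∈ Finsupp.supported R R (Set.Iic i) := by
  obtain ⟨i, hi, hmax⟩ := g.support.exists_max_image id (Finsupp.support_nonempty_iff.2 hg)
  exact ⟨i, hi, (Finsupp.mem_supported _ _).2 hmax⟩

theorem mem_supported_Iio_of_apply_eq_zero {g : ι →₀ R} {i : ι}
    (hg : g ∈ Finsupp.supported R R (Set.Iic i)) (hgi : g i = 0) :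
    g ∈ Finsupp.supported R R (Set.Iio i) := by
  refine (Finsupp.mem_supported _ _).2 fun j hj => lt_of_le_of_ne
    ((Finsupp.mem_supported _ _).1 hg hj) ?_
  rintro rfl
  exact Finsupp.mem_support_iff.1 hj hgi

theorem le_span_of_leadingIdeal_le_span [WellFoundedLT ι] {f : ι → ι →₀ R}
    (hfN : ∀ i, f i ∈ N ⊓ Finsupp.supported R R (Set.Iic i))
    (hf : ∀ i, leadingIdeal N i ≤ Ideal.span {f i i}) :
    N ≤ Submodule.span R (Set.range fun i : {i // f i i ≠ 0} => f i) := by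
  set V := Submodule.span R (Set.range fun i : {i // f i i ≠ 0} => f i)
  have hIic : ∀ i, ∀ g ∈ N, g ∈ Finsupp.supported R R (Set.Iic i) → g ∈ V := fun i => by
    induction i using WellFoundedLT.induction with
    | ind i ih =>
      have hIio : ∀ g ∈ N, g ∈ Finsupp.supported R R (Set.Iio i) → g ∈ V := fun g hg hgi => by
        rcases eq_or_ne g 0 with rfl | hne
        · exact V.zero_mem
        · obtain ⟨j, hj, hgj⟩ := exists_mem_support_mem_supported_Iic hne
          exact ih j ((Finsupp.mem_supported _ _).1 hgi hj) g hg hgj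
      intro g hg hgi
      obtain ⟨c, hc⟩ := Ideal.mem_span_singleton'.1 (hf i ⟨g, ⟨hg, hgi⟩, rfl⟩)
      have hc : c * f i i = g i := hc
      by_cases hfi : f i i = 0
      · exact hIio g hg (mem_supported_Iio_of_apply_eq_zero hgi (by rw [← hc, hfi, mul_zero]))
      · have hrest : g - c • f i ∈ V :=
          hIio _ (N.sub_mem hg (N.smul_mem c (hfN i).1)) <| mem_supported_Iio_of_apply_eq_zero
            (Submodule.sub_mem _ hgi (Submodule.smul_mem _ c (hfN i).2)) (by simp [hc])
        have hfV : f i ∈ V := Submodule.subset_span ⟨⟨i, hfi⟩, rfl⟩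
        exact sub_add_cancel g (c • f i) ▸ V.add_mem hrest (V.smul_mem c hfV)
  intro g hg
  rcases eq_or_ne g 0 with rfl | hne
  · exact V.zero_mem
  · obtain ⟨i, -, hgi⟩ := exists_mem_support_mem_supported_Iic hne
    exact hIic i g hg hgi

theorem isTriangular_of_mem_supported_Iic {f : ι → ι →₀ R}
    (hf : ∀ i, f i ∈ Finsupp.supported R R (Set.Iic i)) :
    IsTriangular (fun i : {i // f i i ≠ 0} => f i) Subtype.val Subtype.val where
  apply_pivot_ne_zero i := i.2
  eq_or_rank_lt i _ hj :=
    ((Finsupp.mem_supported _ _).1 (hf i) (Finsupp.mem_support_iff.2 hj)).eq_or_lt.imp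
      Subtype.ext id

end LeadingCoefficients

variable [IsDomain R] [IsPrincipalIdealRing R]

theorem free_submodule_finsupp (N : Submodule R (ι →₀ R)) : Module.Free R N := by
  obtain ⟨_, _⟩ := exists_wellFoundedLT ι
  choose f hfN hf using fun i =>
    Submodule.mem_map.1 (Submodule.IsPrincipal.generator_mem (leadingIdeal N i))
  have hle : ∀ i, leadingIdeal N i ≤ Ideal.span {f i i} := fun i => by
    rw [← Finsupp.lapply_apply (R := R) i (f i), hf i, Ideal.span_singleton_generator]
  have hindep : LinearIndependent R fun i : {i // f i i ≠ 0} => f i :=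
    (isTriangular_of_mem_supported_Iic fun i => (hfN i).2).linearIndependent
  have hspan : N = Submodule.span R (Set.range fun i : {i // f i i ≠ 0} => f i) :=
    (le_span_of_leadingIdeal_le_span hfN hle).antisymm
      (Submodule.span_le.2 (Set.range_subset_iff.2 fun i => (hfN i).1))
  exact Module.Free.of_equiv
    ((Module.Basis.span hindep).repr.symm.trans (LinearEquiv.ofEq _ _ hspan.symm))

theorem free_of_le_span {M : Type*} [AddCommGroup M] [Module R M] {v : ι → M}
    (hv : LinearIndependent R v) {N : Submodule R M} (hN : N ≤ Submodule.span R (Set.range v)) :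
    Module.Free R N := by
  let coords : N →ₗ[R] ι →₀ R := hv.repr ∘ₗ Submodule.inclusion hN
  have hcoords : Function.Injective coords :=
    (LinearMap.ker_eq_bot.1 hv.repr_ker).comp (Submodule.inclusion_injective hN)
  have := free_submodule_finsupp coords.range
  exact Module.Free.of_equiv (LinearEquiv.ofInjective coords hcoords).symm

end SubmodulesOfFreeModules

section TriangularPresentation

variable {R I X W M : Type*} [CommRing R] [LinearOrder W] [AddCommGroup M] [Module R M]
  {v : I → X →₀ R} {p : I → X} {μ : I → W} {π : (X →₀ R) →ₗ[R] M}

theorem supported_le_iff_forall_single_mem {A : Type*} [Semiring A] {V : Submodule A (X →₀ A)}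
    {s : Set X} : Finsupp.supported A A s ≤ V ↔ ∀ x ∈ s, Finsupp.single x 1 ∈ V := by
  rw [Finsupp.supported_eq_span_single, Submodule.span_le, Set.image_subset_iff]
  rfl

namespace IsTriangular

theorem disjoint_supported_span [IsDomain R] (hv : IsTriangular v p μ) :
    Disjoint (Finsupp.supported R R (Set.range p)ᶜ) (Submodule.span R (Set.range v)) := by
  refine Submodule.disjoint_def.2 fun a hsupp hspan => ?_
  obtain ⟨l, rfl⟩ := (Finsupp.mem_span_range_iff_exists_finsupp).1 hspan
  rw [← Finsupp.linearCombination_apply] at hsupp ⊢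
  suffices l = 0 by rw [this, map_zero]
  by_contra hl
  obtain ⟨i, hi⟩ := hv.exists_linearCombination_apply_ne_zero hl
  exact (Finsupp.mem_supported _ _).1 hsupp (Finsupp.mem_support_iff.2 hi) ⟨i, rfl⟩

theorem linearIndependent_nonpivots [IsDomain R] (hv : IsTriangular v p μ)
    (hπ : LinearMap.ker π = Submodule.span R (Set.range v)) :
    LinearIndependent R fun x : ↥(Set.range p)ᶜ => π (Finsupp.single x.1 1) := by
  have hsingle : LinearIndependent R fun x : ↥(Set.range p)ᶜ => Finsupp.single x.1 (1 : R) :=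
    (Finsupp.linearIndependent_single_one R X).comp _ Subtype.val_injective
  refine hsingle.map ?_
  rw [hπ, Set.range_comp' (fun x => Finsupp.single x (1 : R)), Subtype.range_coe,
    ← Finsupp.supported_eq_span_single]
  exact hv.disjoint_supported_span

theorem map_single_pivot_mem_span_nonpivots [WellFoundedLT W] (hv : IsTriangular v p μ)
    (hπ : LinearMap.ker π = Submodule.span R (Set.range v)) {s : Set X}
    (hunit : ∀ i, p i ∈ s → IsUnit (v i (p i)))
    (hsupp : ∀ i, p i ∈ s → v i ∈ Finsupp.supported R R s) (i : I) (hi : p i ∈ s) :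
    π (Finsupp.single (p i) 1) ∈
      Submodule.span R (Set.range fun x : ↥(Set.range p)ᶜ => π (Finsupp.single x.1 1)) := by
  classical
  induction i using (InvImage.wf μ wellFounded_lt).induction with
  | _ i ih =>
  set V := Submodule.span R (Set.range fun x : ↥(Set.range p)ᶜ => π (Finsupp.single x.1 1))
  have hrest : (v i).erase (p i) ∈ V.comap π := by
    refine supported_le_iff_forall_single_mem.2 (fun x hx => ?_)
      ((Finsupp.mem_supported R _).2 subset_rfl)
    rw [Finset.mem_coe, Finsupp.support_erase, Finset.mem_erase] at hx
    by_cases hxp : x ∈ Set.range p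
    · obtain ⟨j, rfl⟩ := hxp
      rcases hv.eq_or_rank_lt i j (Finsupp.mem_support_iff.1 hx.2) with rfl | hlt
      · exact absurd rfl hx.1
      · exact ih j hlt ((Finsupp.mem_supported _ _).1 (hsupp i hi) hx.2)
    · exact Submodule.subset_span ⟨⟨x, hxp⟩, rfl⟩
  have hsolve : v i (p i) • π (Finsupp.single (p i) 1) = -π ((v i).erase (p i)) := by
    have hvi : π (v i) = 0 := LinearMap.mem_ker.1 (hπ ▸ Submodule.subset_span ⟨i, rfl⟩)
    rw [← Finsupp.single_add_erase (p i) (v i), map_add] at hvi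
    rw [← map_smul, Finsupp.smul_single_one, eq_neg_of_add_eq_zero_left hvi]
  rw [← V.smul_mem_iff_of_isUnit (hunit i hi), hsolve]
  exact V.neg_mem hrest

theorem map_supported_le_span_nonpivots [WellFoundedLT W] (hv : IsTriangular v p μ)
    (hπ : LinearMap.ker π = Submodule.span R (Set.range v)) {s : Set X}
    (hunit : ∀ i, p i ∈ s → IsUnit (v i (p i)))
    (hsupp : ∀ i, p i ∈ s → v i ∈ Finsupp.supported R R s) :
    (Finsupp.supported R R s).map π ≤
      Submodule.span R (Set.range fun x : ↥(Set.range p)ᶜ => π (Finsupp.single x.1 1)) := by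
  refine Submodule.map_le_iff_le_comap.2 (supported_le_iff_forall_single_mem.2 fun x hx => ?_)
  by_cases hxp : x ∈ Set.range p
  · obtain ⟨i, rfl⟩ := hxp
    exact hv.map_single_pivot_mem_span_nonpivots hπ hunit hsupp i hx
  · exact Submodule.subset_span ⟨⟨x, hxp⟩, rfl⟩

theorem free_of_le_map_supported [IsDomain R] [IsPrincipalIdealRing R] [WellFoundedLT W]
    (hv : IsTriangular v p μ) (hπ : LinearMap.ker π = Submodule.span R (Set.range v)) {s : Set X}
    (hunit : ∀ i, p i ∈ s → IsUnit (v i (p i)))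
    (hsupp : ∀ i, p i ∈ s → v i ∈ Finsupp.supported R R s) {N : Submodule R M}
    (hN : N ≤ (Finsupp.supported R R s).map π) : Module.Free R N :=
  free_of_le_span (hv.linearIndependent_nonpivots hπ)
    (hN.trans (hv.map_supported_le_span_nonpivots hπ hunit hsupp))

end IsTriangular

/-- The quotient map onto the abelian group presented by the generators `X` and the relators `rel`,
with the free abelian group replaced by the isomorphic `X →₀ ℤ`. -/
noncomputable def presentationMap (rel : I → FreeAbelianGroup X) :
    (X →₀ ℤ) →ₗ[ℤ] FreeAbelianGroup X ⧸ AddSubgroup.closure (Set.range rel) :=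
  ((QuotientAddGroup.mk' _).comp Finsupp.toFreeAbelianGroup).toIntLinearMap

theorem ker_presentationMap (rel : I → FreeAbelianGroup X) :
    LinearMap.ker (presentationMap rel) =
      Submodule.span ℤ (Set.range fun i => (rel i).toFinsupp) := by
  have hmap : (AddSubgroup.closure (Set.range rel)).map
      (FreeAbelianGroup.equivFinsupp X).toAddMonoidHom =
        AddSubgroup.closure (Set.range fun i => (rel i).toFinsupp) := by
    rw [AddMonoidHom.map_closure, ← Set.range_comp]
    rfl
  ext a
  rw [LinearMap.mem_ker, ← Submodule.mem_toAddSubgroup (Submodule.span _ _),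
    Submodule.span_int_eq_addSubgroupClosure, ← hmap]
  exact (QuotientAddGroup.eq_zero_iff _).trans
    (AddSubgroup.mem_map_equiv (f := FreeAbelianGroup.equivFinsupp X)).symm

theorem free_addSubgroup_of_isTriangular [WellFoundedLT W] {rel : I → FreeAbelianGroup X}
    (hrel : IsTriangular (fun i => (rel i).toFinsupp) p μ) {s : Set X}
    (hunit : ∀ i, p i ∈ s → IsUnit (FreeAbelianGroup.coeff (p i) (rel i)))
    (hsupp : ∀ i, p i ∈ s → ↑(rel i).support ⊆ s)
    {H : AddSubgroup (FreeAbelianGroup X ⧸ AddSubgroup.closure (Set.range rel))}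
    (hH : ∀ h ∈ H, ∃ a : FreeAbelianGroup X, ↑a.support ⊆ s ∧ QuotientAddGroup.mk a = h) :
    Module.Free ℤ H := by
  refine hrel.free_of_le_map_supported (ker_presentationMap rel) hunit hsupp
    (N := AddSubgroup.toIntSubmodule H) fun h hh => ?_
  obtain ⟨a, ha, rfl⟩ := hH h hh
  exact ⟨a.toFinsupp, ha,
    congrArg (QuotientAddGroup.mk' _) (Finsupp.toFreeAbelianGroup_toFinsupp a)⟩

end TriangularPresentation

section Filtration

universe w

theorem mk_biUnion_le_of_le {I Φ : Type w} {κ : Cardinal.{w}} (hκ : ℵ₀ ≤ κ) {s : Set I}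
    (hs : #s ≤ κ) {f : I → Set Φ} (hf : ∀ i ∈ s, #(f i) ≤ κ) : #(⋃ i ∈ s, f i : Set Φ) ≤ κ :=
  calc #(⋃ i ∈ s, f i : Set Φ) ≤ #s * ⨆ i : s, #(f i) := mk_biUnion_le f s
    _ ≤ κ * κ := mul_le_mul' hs (ciSup_le' fun i => hf i i.2)
    _ = κ := mul_eq_self hκ

variable {I Φ : Type w} {ι : Type*} {κ : Cardinal.{w}} {t : I → ι → Φ} {N : I → Set Φ}
  {A : Set Φ}

theorem mk_setOf_forall_mem_le [Finite ι] (hκ : ℵ₀ ≤ κ) (ht : Function.Injective t)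
    (hA : #A ≤ κ) : #{i | ∀ m, t i m ∈ A} ≤ κ := by
  obtain ⟨n, ⟨e⟩⟩ := Finite.exists_equiv_fin ι
  let toTuple (i : {i | ∀ m, t i m ∈ A}) (r : Fin n) : A := ⟨t i (e.symm r), i.2 _⟩
  have hinj : Function.Injective toTuple := fun i j hij => Subtype.ext <| ht <| funext fun m => by
    simpa [toTuple] using congrArg Subtype.val (congrFun hij (e m))
  calc #{i | ∀ m, t i m ∈ A} ≤ #(Fin n → A) := mk_le_of_injective hinj
    _ = #A ^ n := by simp
    _ ≤ κ ^ n := pow_le_pow_left' hA n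
    _ ≤ κ := power_nat_le hκ

/-- One step of closing `A` under dependencies: add `N i` for each `i` all of whose coordinates
`t i m` lie in `A`. -/
def depStep (t : I → ι → Φ) (N : I → Set Φ) (A : Set Φ) : Set Φ :=
  A ∪ ⋃ i ∈ {i | ∀ m, t i m ∈ A}, N i

/-- The least superset of `A` that contains `N i` whenever it contains all coordinates `t i m`
(for a finite set of coordinates `m`). -/
def depClosure (t : I → ι → Φ) (N : I → Set Φ) (A : Set Φ) : Set Φ :=
  ⋃ n : ℕ, (depStep t N)^[n] A

theorem depStep_mono : Monotone (depStep t N) := fun _ _ h =>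
  Set.union_subset_union h (Set.biUnion_subset_biUnion_left fun _ hi m => h (hi m))

theorem subset_depStep : A ⊆ depStep t N A := Set.subset_union_left

theorem mk_depStep_le [Finite ι] (hκ : ℵ₀ ≤ κ) (ht : Function.Injective t)
    (hN : ∀ i, (N i).Countable) (hA : #A ≤ κ) : #(depStep t N A) ≤ κ :=
  (mk_union_le _ _).trans <| add_le_of_le hκ hA <|
    mk_biUnion_le_of_le hκ (mk_setOf_forall_mem_le hκ ht hA) fun i _ => (hN i).le_aleph0.trans hκ

theorem subset_depClosure : A ⊆ depClosure t N A :=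
  Set.subset_iUnion_of_subset 0 subset_rfl

theorem depClosure_mono : Monotone (depClosure t N) := fun _ _ h =>
  Set.iUnion_mono fun n => depStep_mono.iterate n h

theorem deps_subset_depClosure [Finite ι] {i : I} (hi : ∀ m, t i m ∈ depClosure t N A) :
    N i ⊆ depClosure t N A := by
  choose stage hstage using fun m => Set.mem_iUnion.1 (hi m)
  obtain ⟨n, hn⟩ := Finite.exists_le stage
  have hmono : Monotone fun n => (depStep t N)^[n] A :=
    depStep_mono.monotone_iterate_of_le_map subset_depStep
  refine Set.subset_iUnion_of_subset (n + 1) ?_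
  rw [Function.iterate_succ_apply']
  have hin : i ∈ {i | ∀ m, t i m ∈ (depStep t N)^[n] A} := fun m => hmono (hn m) (hstage m)
  exact (Set.subset_biUnion_of_mem hin).trans Set.subset_union_right

theorem mk_depClosure_le [Finite ι] (hκ : ℵ₀ ≤ κ) (ht : Function.Injective t)
    (hN : ∀ i, (N i).Countable) (hA : #A ≤ κ) : #(depClosure t N A) ≤ κ := by
  have hstage : ∀ n : ℕ, #((depStep t N)^[n] A) ≤ κ := fun n => by
    induction n with
    | zero => exact hA
    | succ n ih =>
      rw [Function.iterate_succ_apply']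
      exact mk_depStep_le hκ ht hN ih
  rw [depClosure, ← Equiv.ulift.{w}.surjective.iUnion_comp, ← Set.biUnion_univ]
  exact mk_biUnion_le_of_le hκ (by simpa using hκ) fun n _ => hstage n.down

theorem exists_mk_Iic_le_of_mk_le_succ (hI : #I ≤ Order.succ κ) (hκ : ℵ₀ ≤ κ) :
    ∃ (_ : LinearOrder I) (_ : WellFoundedLT I), ∀ i : I, #(Set.Iic i) ≤ κ := by
  obtain ⟨_, _, htype⟩ := exists_ord_eq_type_lt I
  refine ⟨_, ‹_›, fun i => ?_⟩
  have hIio : #(Set.Iio i) ≤ κ := Order.lt_succ_iff.1 ((mk_Iio_lt i htype).trans_le hI)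
  rw [← Set.Iio_insert]
  exact mk_insert_le.trans (add_le_of_le hκ hIio (one_le_aleph0.trans hκ))

theorem exists_forall_mem_iff_le_of_monotone {W : Type*} [LinearOrder W] [WellFoundedLT W]
    [Nonempty W] {C : W → Set Φ} (hC : Monotone C) :
    ∃ c : Φ → W, ∀ φ ∈ ⋃ ε, C ε, ∀ ε, φ ∈ C ε ↔ c φ ≤ ε := by
  suffices ∀ φ, ∃ ε₀ : W, φ ∈ ⋃ ε, C ε → ∀ ε, φ ∈ C ε ↔ ε₀ ≤ ε by
    choose c hc using this
    exact ⟨c, hc⟩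
  intro φ
  by_cases hφ : {ε | φ ∈ C ε}.Nonempty
  · have hmin : ∀ ε ∈ {ε | φ ∈ C ε}, wellFounded_lt.min _ hφ ≤ ε := fun ε h =>
      wellFounded_lt.min_le h
    exact ⟨_, fun _ ε => ⟨hmin ε, fun h => hC h (wellFounded_lt.min_mem _ hφ)⟩⟩
  · exact ⟨Classical.arbitrary W, fun h => absurd (Set.mem_iUnion.1 h) hφ⟩

theorem exists_filtration [Finite ι] [Nonempty ι] [Nonempty I] (hκ : ℵ₀ ≤ κ)
    (hI : #I ≤ Order.succ κ) (ht : Function.Injective t) (hN : ∀ i, (N i).Countable) :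
    ∃ (W : Type w) (_ : LinearOrder W) (_ : WellFoundedLT W) (c : Φ → W),
      (∀ i, ∀ φ ∈ N i, ∃ m, c φ ≤ c (t i m)) ∧ ∀ ε, #{i | ∀ m, c (t i m) ≤ ε} ≤ κ := by
  obtain ⟨_, _, hIic⟩ := exists_mk_Iic_le_of_mk_le_succ hI hκ
  let C (ε : I) : Set Φ := depClosure t N (⋃ i ∈ Set.Iic ε, Set.range (t i))
  have hCmono : Monotone C := fun ε ε' h => depClosure_mono <|
    Set.biUnion_subset_biUnion_left (Set.Iic_subset_Iic.2 h)
  have hCcard : ∀ ε, #(C ε) ≤ κ := fun ε => mk_depClosure_le hκ ht hN <|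
    mk_biUnion_le_of_le hκ (hIic ε) fun i _ => (Set.countable_range _).le_aleph0.trans hκ
  have hcoord : ∀ i m, t i m ∈ ⋃ ε, C ε := fun i m => Set.mem_iUnion.2
    ⟨i, subset_depClosure (Set.mem_biUnion (Set.mem_Iic.2 le_rfl) ⟨m, rfl⟩)⟩
  obtain ⟨c, hc⟩ := exists_forall_mem_iff_le_of_monotone hCmono
  refine ⟨I, _, ‹_›, c, fun i φ hφ => ?_, fun ε => ?_⟩
  · obtain ⟨m, hm⟩ := Finite.exists_max fun m => c (t i m)
    have hφC : φ ∈ C (c (t i m)) :=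
      deps_subset_depClosure (fun m' => (hc _ (hcoord i m') _).2 (hm m')) hφ
    exact ⟨m, (hc φ (Set.mem_iUnion.2 ⟨_, hφC⟩) _).1 hφC⟩
  · simp only [← hc _ (hcoord _ _)]
    exact mk_setOf_forall_mem_le hκ ht (hCcard ε)

end Filtration

section BlockLex

variable {α W : Type*}

/-- The relation that compares first the blocks `B a`, `B b`, and within a block `w` uses `r w`. -/
def blockLex [LT W] (B : α → W) (r : W → α → α → Prop) (a b : α) : Prop :=
  B a < B b ∨ B a = B b ∧ r (B b) a b

variable [LinearOrder W] {B : α → W} {r : W → α → α → Prop} {a b : α}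

theorem blockLex_of_le (hB : B a ≤ B b) (hr : B a = B b → r (B b) a b) : blockLex B r a b :=
  hB.lt_or_eq.imp_right fun h => ⟨h, hr h⟩

theorem wellFounded_blockLex [WellFoundedLT W] (hr : ∀ w, WellFounded (r w)) :
    WellFounded (blockLex B r) := by
  have hlex : WellFounded (Function.onFun (Sigma.Lex (· < ·) r) fun a => (⟨B a, a⟩ : Σ _ : W, α)) :=
    WellFounded.sigma_lex_of_wellFoundedOn_fiber (g := fun _ : W => id)
      (InvImage.wf B wellFounded_lt) fun w => (hr w).wellFoundedOn
  refine hlex.mono fun a b hab => Sigma.lex_iff.2 (hab.imp_right fun ⟨hB, hab⟩ => ⟨hB, ?_⟩)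
  simpa using hab

theorem isWellOrder_blockLex [WellFoundedLT W] (hr : ∀ w, IsWellOrder α (r w)) :
    IsWellOrder α (blockLex B r) where
  wf := wellFounded_blockLex fun w => (hr w).wf
  trichotomous a b hab hba := by
    have hB : B a = B b := le_antisymm (not_lt.1 fun h => hba (.inl h)) (not_lt.1 (hab ∘ .inl))
    exact (hr (B b)).trichotomous a b (fun h => hab (.inr ⟨hB, h⟩))
      fun h => hba (.inr ⟨hB.symm, hB ▸ h⟩)

end BlockLex

theorem exists_nat_rank_ge {α : Type*} {P : α → Set α} (hwf : WellFounded fun ν η => ν ∈ P η)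
    (hfin : ∀ η, (P η).Finite) (e : α → ℕ) :
    ∃ h : α → ℕ, (∀ η, e η ≤ h η) ∧ ∀ η, ∀ ν ∈ P η, h ν < h η := by
  have : ∀ η, Fintype (P η) := fun η => (hfin η).fintype
  let h : α → ℕ := hwf.fix fun η ih => e η + ∑ ν : P η, (ih ν ν.2 + 1)
  have hh : ∀ η, h η = e η + ∑ ν : P η, (h ν + 1) := fun η => hwf.fix_eq _ η
  refine ⟨h, fun η => (hh η).symm ▸ Nat.le_add_right _ _, fun η ν hν => ?_⟩
  have hterm : h ν + 1 ≤ ∑ ν : P η, (h ν + 1) :=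
    Finset.single_le_sum (f := fun ν : P η => h ν + 1) (fun _ _ => Nat.zero_le _)
      (Finset.mem_univ ⟨ν, hν⟩)
  have := hh η
  lia

section RestrictAt

variable {k : ℕ} {S : Type*} {η η' : Fin (k + 1) → ℕ → S} {m m' : Fin (k + 1)} {n n' : ℕ}

theorem restrictAt_eq_iff : restrictAt η m n = restrictAt η' m' n' ↔
    m = m' ∧ n = n' ∧ (∀ l ≠ m, η l = η' l) ∧ ∀ i < n, η m i = η' m i := by
  constructor
  · intro h
    rw [restrictAt, restrictAt, Res.mk.injEq] at h
    obtain ⟨rfl, hseq, hrest⟩ := h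
    obtain ⟨rfl, hval⟩ := List.ofFn_inj'.1 hseq |> Sigma.mk.inj_iff.1
    exact ⟨rfl, rfl, fun l hl => congrFun (congrFun (eq_of_heq hrest) l) hl,
      fun i hi => congrFun (eq_of_heq hval) ⟨i, hi⟩⟩
  · rintro ⟨rfl, rfl, hrest, hval⟩
    rw [restrictAt, restrictAt, Res.mk.injEq]
    refine ⟨rfl, ?_, heq_of_eq (funext fun l => funext fun hl => hrest l hl)⟩
    exact congrArg List.ofFn (funext fun i => hval i i.2)

theorem restrictAt_injective (η : Fin (k + 1) → ℕ → S) (m : Fin (k + 1)) :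
    Function.Injective (restrictAt η m) := fun _ _ h => (restrictAt_eq_iff.1 h).2.1

theorem eventually_restrictAt_ne (h : η ≠ η') (m : Fin (k + 1)) :
    ∀ᶠ n in Filter.atTop, restrictAt η m n ≠ restrictAt η' m n := by
  obtain ⟨l, hl⟩ := Function.ne_iff.1 h
  obtain ⟨i, hi⟩ := Function.ne_iff.1 hl
  filter_upwards [Filter.eventually_gt_atTop i] with n hn heq
  obtain ⟨-, -, hrest, hval⟩ := restrictAt_eq_iff.1 heq
  rcases eq_or_ne l m with rfl | hlm
  exacts [hi (hval i hn), hl (hrest l hlm)]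

theorem eventually_restrictAt_notMem {s : Set (Res k S)} (hs : s.Finite)
    (η : Fin (k + 1) → ℕ → S) (m : Fin (k + 1)) :
    ∀ᶠ n in Filter.atTop, restrictAt η m n ∉ s := by
  rw [← Nat.cofinite_eq_atTop]
  exact (restrictAt_injective η m).tendsto_cofinite.eventually hs.compl_mem_cofinite

end RestrictAt

section FreeOrder

universe w

variable {k : ℕ} {S : Type w} {Λ : Set (Fin (k + 1) → ℕ → S)} {Λ' : Set Λ} {P : Λ → Set Λ}
  {Q : Λ → Set (Res k S)} {u : Λ → Finset (Fin (k + 1))}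

/-- A well-ordering `r` and a choice of coordinates `ℓ` that make `Λ'` free over the dependencies
`P` (on full tuples) and `Q` (on restricted tuples): `r` respects `P`, and for all large `n` the
restriction of `η` at `⟨ℓ η, n⟩` is not shared with an earlier tuple of `Λ'` and not among the
dependencies `Q` of `η` or of an earlier tuple of `Λ'`. -/
structure IsFreeOrder (Λ' : Set Λ) (P : Λ → Set Λ) (Q : Λ → Set (Res k S)) (r : Λ → Λ → Prop)
    (ℓ : Λ → Fin (k + 1)) : Prop where
  isWellOrder : IsWellOrder Λ r
  rel_of_mem : ∀ η ∈ Λ', ∀ ν ∈ Λ', ν ∈ P η → r ν η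
  eventually_ne : ∀ η ∈ Λ', ∀ᶠ n in Filter.atTop, ∀ η' ∈ Λ', r η' η →
    restrictAt η.1 (ℓ η) n ≠ restrictAt η'.1 (ℓ η) n
  eventually_notMem : ∀ η ∈ Λ', ∀ᶠ n in Filter.atTop, ∀ ν ∈ Λ', ¬ r η ν →
    restrictAt η.1 (ℓ η) n ∉ Q ν

/-- `Λ'` has a free order whose coordinates are chosen from the sets `u η`; the freedom in `u` is
what the induction on the cardinality of `Λ'` consumes. -/
def HasFreeOrder (Λ' : Set Λ) (P : Λ → Set Λ) (Q : Λ → Set (Res k S))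
    (u : Λ → Finset (Fin (k + 1))) : Prop :=
  ∃ r ℓ, IsFreeOrder Λ' P Q r ℓ ∧ ∀ η ∈ Λ', ℓ η ∈ u η

namespace HasFreeOrder

theorem mono {u' : Λ → Finset (Fin (k + 1))} (h : HasFreeOrder Λ' P Q u)
    (hu : ∀ η ∈ Λ', u η ⊆ u' η) : HasFreeOrder Λ' P Q u' :=
  let ⟨r, ℓ, hfree, hℓ⟩ := h
  ⟨r, ℓ, hfree, fun η hη => hu η hη (hℓ η hη)⟩

theorem of_blocks {W : Type*} [LinearOrder W] [WellFoundedLT W] (B : Λ → W)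
    (hblock : ∀ w, HasFreeOrder (Λ' ∩ B ⁻¹' {w}) P Q u)
    (hP : ∀ η ∈ Λ', ∀ ν ∈ Λ', ν ∈ P η → B ν ≤ B η)
    (hne : ∀ η ∈ Λ', ∀ᶠ n in Filter.atTop, ∀ m ∈ u η, ∀ η' ∈ Λ', B η' < B η →
      restrictAt η.1 m n ≠ restrictAt η'.1 m n)
    (hQ : ∀ η ∈ Λ', ∀ᶠ n in Filter.atTop, ∀ m ∈ u η, ∀ η' ∈ Λ', B η' < B η →
      restrictAt η.1 m n ∉ Q η') :
    HasFreeOrder Λ' P Q u := by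
  choose r ℓ hfree hℓ using hblock
  have hmem : ∀ η ∈ Λ', ℓ (B η) η ∈ u η := fun η hη => hℓ _ η ⟨hη, rfl⟩
  refine ⟨blockLex B r, fun η => ℓ (B η) η, ⟨?_, ?_, ?_, ?_⟩, hmem⟩
  · exact isWellOrder_blockLex fun w => (hfree w).isWellOrder
  · exact fun η hη ν hν hνη => blockLex_of_le (hP η hη ν hν hνη) fun hB =>
      (hfree (B η)).rel_of_mem η ⟨hη, rfl⟩ ν ⟨hν, hB⟩ hνη
  · intro η hη
    filter_upwards [hne η hη, (hfree (B η)).eventually_ne η ⟨hη, rfl⟩] with n hcross hwithin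
    rintro η' hη' (hlt | ⟨hB, hr⟩)
    exacts [hcross _ (hmem η hη) η' hη' hlt, hwithin η' ⟨hη', hB⟩ hr]
  · intro η hη
    filter_upwards [hQ η hη, (hfree (B η)).eventually_notMem η ⟨hη, rfl⟩]
      with n hcross hwithin η' hη' hr
    rcases (not_lt.1 fun h => hr (.inl h) : B η' ≤ B η).lt_or_eq with hlt | hB
    · exact hcross _ (hmem η hη) η' hη' hlt
    · exact hwithin η' ⟨hη', hB⟩ fun h => hr (.inr ⟨hB.symm, hB ▸ h⟩)

theorem add_deps (h : HasFreeOrder Λ' (fun _ => ∅) (fun _ => ∅) u)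
    (hP : ∀ η ∈ Λ', ∀ ν ∈ Λ', ν ∉ P η)
    (hQ : ∀ η ∈ Λ', ∀ᶠ n in Filter.atTop, ∀ m, ∀ η' ∈ Λ', restrictAt η.1 m n ∉ Q η') :
    HasFreeOrder Λ' P Q u := by
  obtain ⟨r, ℓ, hfree, hℓ⟩ := h
  refine ⟨r, ℓ, ⟨hfree.isWellOrder, fun η hη ν hν h => absurd h (hP η hη ν hν),
    hfree.eventually_ne, fun η hη => ?_⟩, hℓ⟩
  filter_upwards [hQ η hη] with n hn η' hη' _
  exact hn _ η' hη'

theorem of_countable (hΛ' : Λ'.Countable) (hwf : WellFounded fun ν η => ν ∈ P η)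
    (hPfin : ∀ η, (P η).Finite) (hQfin : ∀ η, (Q η).Finite) (hu : ∀ η ∈ Λ', (u η).Nonempty) :
    HasFreeOrder Λ' P Q u := by
  classical
  obtain ⟨e, he⟩ := Set.countable_iff_exists_injOn.1 hΛ'
  obtain ⟨h, heh, hPh⟩ := exists_nat_rank_ge hwf hPfin e
  have hinitial : ∀ η, {η' ∈ Λ' | h η' ≤ h η}.Finite := fun η =>
    ((Set.finite_Iic (h η)).subset (Set.image_subset_iff.2 fun η' hη' =>
      (heh η').trans hη'.2)).of_finite_image (he.mono fun _ hη' => hη'.1)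
  let r : Λ → Λ → Prop := blockLex h fun _ => WellOrderingRel
  have hr : IsWellOrder Λ r := isWellOrder_blockLex fun _ => inferInstance
  choose! ℓ hℓ using hu
  refine ⟨r, ℓ, ⟨hr, fun η _ ν _ hν => .inl (hPh η ν hν), fun η _ => ?_, fun η _ => ?_⟩, hℓ⟩
  · have hsep : ∀ η' ∈ {η' ∈ Λ' | h η' ≤ h η}, ∀ᶠ n in Filter.atTop, η' ≠ η →
        restrictAt η.1 (ℓ η) n ≠ restrictAt η'.1 (ℓ η) n := fun η' _ => by
      rcases eq_or_ne η' η with rfl | hne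
      · simp
      · exact (eventually_restrictAt_ne (Subtype.coe_ne_coe.2 hne.symm) _).mono fun _ h _ => h
    filter_upwards [(Filter.eventually_all_finite (hinitial η)).2 hsep] with n hn η' hη' hr'
    exact hn η' ⟨hη', hr'.elim le_of_lt fun h => h.1.le⟩ (ne_of_irrefl hr')
  · filter_upwards [(Filter.eventually_all_finite (hinitial η)).2 fun η' _ =>
      eventually_restrictAt_notMem (hQfin η') η.1 (ℓ η)] with n hn η' hη' hr'
    exact hn η' ⟨hη', not_lt.1 fun h => hr' (.inl h)⟩

end HasFreeOrder

/-- The coordinates occurring in the dependencies of `η`. -/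
def depCoords (P : Λ → Set Λ) (Q : Λ → Set (Res k S)) (η : Λ) : Set (ℕ → S) :=
  (⋃ ν ∈ P η, Set.range ν.1) ∪ ⋃ ρ ∈ Q η, Set.range fun l : {l // l ≠ ρ.m} => ρ.rest l l.2

theorem countable_depCoords (hP : ∀ η, (P η).Countable) (hQ : ∀ η, (Q η).Countable) (η : Λ) :
    (depCoords P Q η).Countable :=
  ((hP η).biUnion fun _ _ => Set.countable_range _).union
    ((hQ η).biUnion fun _ _ => Set.countable_range _)

theorem apply_mem_depCoords_of_mem {η ν : Λ} (hν : ν ∈ P η) (l : Fin (k + 1)) :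
    ν.1 l ∈ depCoords P Q η :=
  .inl (Set.mem_biUnion hν ⟨l, rfl⟩)

theorem apply_mem_depCoords_of_restrictAt_mem {η : Λ} {ζ : Fin (k + 1) → ℕ → S}
    {l m : Fin (k + 1)} {n : ℕ} (h : restrictAt ζ m n ∈ Q η) (hl : l ≠ m) :
    ζ l ∈ depCoords P Q η :=
  .inr (Set.mem_biUnion h ⟨⟨l, hl⟩, rfl⟩)

namespace HasFreeOrder

theorem of_filtration {W : Type*} [LinearOrder W] [WellFoundedLT W] (c : (ℕ → S) → W)
    (hc : ∀ η ∈ Λ', ∀ φ ∈ depCoords P Q η, ∃ m, c φ ≤ c (η.1 m)) {M : Λ → Fin (k + 1)}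
    (hM : ∀ (η : Λ) m, c (η.1 m) ≤ c (η.1 (M η)))
    (hblock : ∀ ε, HasFreeOrder (Λ' ∩ (fun η : Λ => c (η.1 (M η))) ⁻¹' {ε}) P Q
      fun η => (u η).erase (M η)) :
    HasFreeOrder Λ' P Q u := by
  have hdep : ∀ η ∈ Λ', ∀ φ ∈ depCoords P Q η, c φ ≤ c (η.1 (M η)) := fun η hη φ hφ =>
    let ⟨m, hm⟩ := hc η hη φ hφ
    hm.trans (hM η m)
  refine HasFreeOrder.mono (of_blocks (fun η : Λ => c (η.1 (M η))) hblock ?_ ?_ ?_)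
    fun η _ => Finset.erase_subset _ _
  · exact fun η hη ν _ hν => hdep η hη _ (apply_mem_depCoords_of_mem hν _)
  · refine fun η _ => .of_forall fun n m hm η' _ hlt heq => ?_
    have hcoord : η.1 (M η) = η'.1 (M η) :=
      (restrictAt_eq_iff.1 heq).2.2.1 _ (Finset.ne_of_mem_erase hm).symm
    exact ((hcoord ▸ hlt).trans_le' (hM η' (M η))).false
  · refine fun η _ => .of_forall fun n m hm η' hη' hlt hmem => hlt.not_ge ?_
    exact hdep η' hη' _
      (apply_mem_depCoords_of_restrictAt_mem hmem (Finset.ne_of_mem_erase hm).symm)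

theorem of_mk_le_aleph (hwf : WellFounded fun ν η => ν ∈ P η) (hPfin : ∀ η, (P η).Finite)
    (hQfin : ∀ η, (Q η).Finite) {j : ℕ} (hΛ' : #Λ' ≤ ℵ_ j) (hu : ∀ η ∈ Λ', j < (u η).card) :
    HasFreeOrder Λ' P Q u := by
  induction j generalizing Λ' u with
  | zero =>
    exact of_countable (le_aleph0_iff_set_countable.1 (by simpa using hΛ')) hwf hPfin hQfin
      fun η hη => Finset.card_pos.1 (hu η hη)
  | succ j ih =>
    rcases Λ'.eq_empty_or_nonempty with rfl | hne
    · exact of_countable Set.countable_empty hwf hPfin hQfin (by simp)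
    have : Nonempty Λ' := hne.to_subtype
    have hcoords : Function.Injective fun η : Λ' => η.1.1 :=
      Subtype.val_injective.comp Subtype.val_injective
    obtain ⟨W, _, _, c, hc, hsmall⟩ := exists_filtration (aleph0_le_aleph j)
      (by simpa [succ_aleph] using hΛ') hcoords fun η => countable_depCoords
        (fun η => (hPfin η).countable) (fun η => (hQfin η).countable) η.1
    choose M hM using fun η : Λ => Finite.exists_max fun m => c (η.1 m)
    refine of_filtration c (fun η hη => hc ⟨η, hη⟩) hM fun ε => ih ?_ fun η hη => ?_
    · have hsub : Λ' ∩ (fun η : Λ => c (η.1 (M η))) ⁻¹' {ε} ⊆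
          Subtype.val '' {η : Λ' | ∀ m, c (η.1.1 m) ≤ ε} :=
        fun η hη => ⟨⟨η, hη.1⟩, fun m => (hM η m).trans_eq hη.2, rfl⟩
      exact (mk_le_mk_of_subset hsub).trans (mk_image_le.trans (hsmall ε))
    · have := Finset.pred_card_le_card_erase (a := M η) (s := u η)
      have := hu η hη.1
      lia

end HasFreeOrder

end FreeOrder

section Regressive

variable {k : ℕ} {Sset : Set Ordinal.{u}} {Λ : Set (Fin (k + 1) → ℕ → ↥Sset)}
  {F : Λ → Set (FullOrRes k Sset)} {η ν : Λ} {l : Fin (k + 1)}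

/-- The full tuples in `F(η̄)`. -/
def fullDeps (F : Λ → Set (FullOrRes k Sset)) (η : Λ) : Set Λ := {ν | Sum.inl ν.1 ∈ F η}

/-- The restricted tuples in `F(η̄)`. -/
def resDeps (F : Λ → Set (FullOrRes k Sset)) (η : Λ) : Set (Res k Sset) := {ρ | Sum.inr ρ ∈ F η}

/-- The supremum of the values of the `l`-th coordinates of the members of `F(η̄)`. -/
noncomputable def depSup (F : Λ → Set (FullOrRes k Sset)) (l : Fin (k + 1)) (η : Λ) :
    Ordinal.{u} :=
  sSup (⋃ w ∈ F η, coordVals w l)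

theorem countable_fullDeps (hF : (F η).Countable) : (fullDeps F η).Countable :=
  hF.preimage (Sum.inl_injective.comp Subtype.val_injective)

theorem finite_fullDeps (hF : (F η).Finite) : (fullDeps F η).Finite :=
  hF.preimage (Sum.inl_injective.comp Subtype.val_injective).injOn

theorem finite_resDeps (hF : (F η).Finite) : (resDeps F η).Finite :=
  hF.preimage Sum.inr_injective.injOn

theorem countable_coordVals (w : FullOrRes k Sset) (l : Fin (k + 1)) :
    (coordVals w l).Countable := by
  rcases w with ν | ρ
  · exact Set.countable_range _
  · by_cases h : l = ρ.m
    · simp only [coordVals, dif_pos h]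
      exact (ρ.seq.finite_toSet.image Subtype.val).countable
    · simp only [coordVals, dif_neg h]
      exact Set.countable_range _

theorem apply_mem_coordVals_restrictAt (ζ : Fin (k + 1) → ℕ → ↥Sset) (l m : Fin (k + 1))
    {i n : ℕ} (hi : i < n) : (ζ l i : Ordinal) ∈ coordVals (Sum.inr (restrictAt ζ m n)) l := by
  by_cases h : l = (restrictAt ζ m n).m
  · simp only [coordVals, dif_pos h]
    obtain rfl : l = m := h
    exact ⟨ζ l i, List.mem_ofFn.2 ⟨⟨i, hi⟩, rfl⟩, rfl⟩
  · simp only [coordVals, dif_neg h]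
    exact ⟨i, rfl⟩

theorem le_depSup (hF : (F η).Countable) {w : FullOrRes k Sset} (hw : w ∈ F η) {o : Ordinal}
    (ho : o ∈ coordVals w l) : o ≤ depSup F l η := by
  have : Countable ↥(⋃ w ∈ F η, coordVals w l) :=
    (hF.biUnion fun w _ => countable_coordVals w l).to_subtype
  exact le_csSup Ordinal.bddAbove_of_small (Set.mem_biUnion hw ho)

namespace Regressive

theorem exists_depSup_lt_apply (hreg : Regressive Λ F) (l : Fin (k + 1)) (η : Λ) :
    ∃ i, depSup F l η < η.1 l i :=
  exists_lt_of_lt_ciSup (hreg.2.2 η l)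

theorem depSup_lt_of_mem_fullDeps (hreg : Regressive Λ F) (hν : ν ∈ fullDeps F η) :
    depSup F l ν < depSup F l η :=
  let ⟨i, hi⟩ := hreg.exists_depSup_lt_apply l ν
  hi.trans_le (le_depSup (hreg.1 η) hν ⟨i, rfl⟩)

theorem wellFounded_fullDeps (hreg : Regressive Λ F) :
    WellFounded fun ν η => ν ∈ fullDeps F η :=
  (InvImage.wf (depSup F 0) wellFounded_lt).mono fun _ _ => hreg.depSup_lt_of_mem_fullDeps

theorem eventually_restrictAt_notMem_resDeps (hreg : Regressive Λ F) (l : Fin (k + 1)) (η : Λ) :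
    ∀ᶠ n in Filter.atTop, ∀ m η', depSup F l η' ≤ depSup F l η →
      restrictAt η.1 m n ∉ resDeps F η' := by
  obtain ⟨i, hi⟩ := hreg.exists_depSup_lt_apply l η
  filter_upwards [Filter.eventually_gt_atTop i] with n hn m η' hle hmem
  exact (hle.trans_lt hi).not_ge
    (le_depSup (hreg.1 η') hmem (apply_mem_coordVals_restrictAt η.1 l m hn))

theorem hasFreeOrder_of_finitary (hreg : Regressive Λ F) (hfin : Finitary F) {Λ' : Set Λ}
    (hΛ' : #Λ' ≤ ℵ_ k) : HasFreeOrder Λ' (fullDeps F) (resDeps F) fun _ => Finset.univ :=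
  .of_mk_le_aleph hreg.wellFounded_fullDeps (fun η => finite_fullDeps (hfin η))
    (fun η => finite_resDeps (hfin η)) hΛ' (by simp)

theorem hasFreeOrder_of_simple (hreg : Regressive Λ F) (hsimple : Simple F) {Λ' : Set Λ}
    (hΛ' : #Λ' ≤ ℵ_ k) : HasFreeOrder Λ' (fullDeps F) (resDeps F) fun _ => Finset.univ := by
  refine .of_blocks (depSup F 0) (fun o => .add_deps ?_ ?_ ?_) ?_ ?_ ?_
  · refine .of_mk_le_aleph ⟨fun _ => ⟨_, fun _ h => h.elim⟩⟩ (by simp) (by simp)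
      ((mk_le_mk_of_subset Set.inter_subset_left).trans hΛ') (by simp)
  · exact fun η hη ν hν hmem =>
      (hreg.depSup_lt_of_mem_fullDeps hmem).ne (hν.2.trans hη.2.symm)
  · intro η hη
    filter_upwards [hreg.eventually_restrictAt_notMem_resDeps 0 η] with n hn m η' hη'
    exact hn m η' (hη'.2.trans hη.2.symm).le
  · exact fun η _ ν _ hν => (hreg.depSup_lt_of_mem_fullDeps hν).le
  · intro η _
    filter_upwards [Filter.eventually_gt_atTop 0] with n hn m _ η' _ hlt heq
    have hF : F η = F η' := hsimple η η' (by
      obtain ⟨-, -, hrest, hval⟩ := restrictAt_eq_iff.1 heq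
      rcases eq_or_ne (Fin.last k) m with rfl | hm
      exacts [hval 0 hn, congrFun (hrest _ hm) 0])
    exact hlt.ne (by rw [depSup, depSup, hF])
  · intro η _
    filter_upwards [hreg.eventually_restrictAt_notMem_resDeps 0 η] with n hn m _ η' _ hlt
    exact hn m η' hlt.le

theorem exists_isFreeOrder (hreg : Regressive Λ F) (hfs : Finitary F ∨ Simple F) {Λ' : Set Λ}
    (hΛ' : #Λ' ≤ ℵ_ k) : ∃ r ℓ, IsFreeOrder Λ' (fullDeps F) (resDeps F) r ℓ :=
  let ⟨r, ℓ, hfree, _⟩ := hfs.elim (hreg.hasFreeOrder_of_finitary · hΛ')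
    (hreg.hasFreeOrder_of_simple · hΛ')
  ⟨r, ℓ, hfree⟩

end Regressive

end Regressive

section Presentation

variable {k : ℕ} {Sset : Set Ordinal.{u}} {Λ : Set (Fin (k + 1) → ℕ → ↥Sset)}
  {F : Λ → Set (FullOrRes k Sset)} {b : Λ → ℕ → ℤ}
  {z : Λ → ℕ → FreeAbelianGroup (Gen2 k Sset Λ)} {g : Gen2 k Sset Λ} {η : Λ} {n : ℕ}

/-- The defining relation of the group with index `(η̄, n)`. -/
def relator (b : Λ → ℕ → ℤ) (z : Λ → ℕ → FreeAbelianGroup (Gen2 k Sset Λ)) (i : Λ × ℕ) :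
    FreeAbelianGroup (Gen2 k Sset Λ) :=
  (i.2.factorial : ℤ) • .of (.Y i.1 (i.2 + 1)) - .of (.Y i.1 i.2) - b i.1 i.2 • z i.1 i.2
    - ∑ m, .of (.X (resMem i.1 m i.2))

theorem relSub2_eq_closure_range_relator (b : Λ → ℕ → ℤ)
    (z : Λ → ℕ → FreeAbelianGroup (Gen2 k Sset Λ)) :
    relSub2 b z = AddSubgroup.closure (Set.range (relator b z)) := by
  rw [relSub2]
  congr 1
  ext g
  simp only [Set.mem_ofPred_eq, Set.mem_range, Prod.exists, relator, eq_comm]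

theorem coeff_freeAbelianGroup_of {X : Type*} [DecidableEq X] (x y : X) :
    FreeAbelianGroup.coeff x (.of y) = if y = x then 1 else 0 := by
  simp [FreeAbelianGroup.coeff, Finsupp.single_apply]

theorem support_subset_of_mem_closure_image_of {X : Type*} {s : Set X} {a : FreeAbelianGroup X}
    (ha : a ∈ AddSubgroup.closure (FreeAbelianGroup.of '' s)) : ↑a.support ⊆ s := by
  intro x hx
  contrapose! hx
  rw [Finset.mem_coe, FreeAbelianGroup.notMem_support_iff, ← AddMonoidHom.mem_ker]
  refine (AddSubgroup.closure_le _).2 ?_ ha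
  rintro _ ⟨y, hy, rfl⟩
  classical
  exact (coeff_freeAbelianGroup_of x y).trans (if_neg (ne_of_mem_of_not_mem hy hx))

/-- The generators that may occur in `z_{η̄,n}` for some `n`. -/
def depGens (F : Λ → Set (FullOrRes k Sset)) (η : Λ) : Set (Gen2 k Sset Λ) :=
  Gen2.X '' (Subtype.val ⁻¹' resDeps F η) ∪ ⋃ ν ∈ fullDeps F η, Set.range (Gen2.Y ν)

theorem support_subset_depGens {a : FreeAbelianGroup (Gen2 k Sset Λ)} (ha : a ∈ zSpan F η n) :
    ↑a.support ⊆ depGens F η := by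
  refine support_subset_of_mem_closure_image_of (AddSubgroup.closure_mono ?_ ha)
  rintro _ (⟨ρ, hρ, rfl⟩ | ⟨ν, hν, -, rfl⟩)
  · exact Set.mem_image_of_mem _ (.inl ⟨ρ, hρ, rfl⟩)
  · exact Set.mem_image_of_mem _ (.inr (Set.mem_biUnion hν ⟨n, rfl⟩))

open Classical in
theorem coeff_relator (g : Gen2 k Sset Λ) (η : Λ) (n : ℕ) :
    FreeAbelianGroup.coeff g (relator b z (η, n)) =
      n.factorial * (if .Y η (n + 1) = g then 1 else 0) - (if .Y η n = g then 1 else 0)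
        - b η n * FreeAbelianGroup.coeff g (z η n)
        - ∑ m, if .X (resMem η m n) = g then 1 else 0 := by
  simp only [relator, map_sub, map_zsmul, map_sum, coeff_freeAbelianGroup_of, smul_eq_mul]

theorem eq_of_mem_support_relator (hz : z η n ∈ zSpan F η n)
    (hg : g ∈ (relator b z (η, n)).support) :
    g = .Y η (n + 1) ∨ g = .Y η n ∨ (∃ m, g = .X (resMem η m n)) ∨ g ∈ depGens F η := by
  contrapose! hg
  obtain ⟨hsucc, hself, hres, hdep⟩ := hg
  have hcoeff : FreeAbelianGroup.coeff g (z η n) = 0 :=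
    (FreeAbelianGroup.notMem_support_iff _ _).1 fun h => hdep (support_subset_depGens hz h)
  rw [FreeAbelianGroup.notMem_support_iff, coeff_relator, hcoeff]
  simp [hsucc.symm, hself.symm, fun m => (hres m).symm]

theorem resMem_eq_iff {m m' : Fin (k + 1)} : resMem η m n = resMem η m' n ↔ m = m' := by
  refine ⟨fun h => ?_, congrArg (resMem η · n)⟩
  exact (restrictAt_eq_iff.1 (congrArg Subtype.val h)).1

open Classical in
/-- The generator eliminated by the relation with index `(η̄, n)`: for `η̄ ∈ Λ'` it is
`x_{η̄↾⟨ℓ η̄, n⟩}` as soon as `N η̄ ≤ n` and `y_{η̄,n}` before that, with coefficient `-1`; for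
`η̄ ∉ Λ'` it is `y_{η̄,n+1}`, with coefficient `n!`. -/
noncomputable def pivot (Λ' : Set Λ) (ℓ : Λ → Fin (k + 1)) (N : Λ → ℕ) (i : Λ × ℕ) :
    Gen2 k Sset Λ :=
  if i.1 ∈ Λ' then if N i.1 ≤ i.2 then .X (resMem i.1 (ℓ i.1) i.2) else .Y i.1 i.2
  else .Y i.1 (i.2 + 1)

/-- `R` is a well-founded order in which the tuples can be eliminated: a relation of `η̄` meets a
pivot of another tuple `η̄'` only if `R η̄' η̄`. -/
structure IsEliminationOrder (F : Λ → Set (FullOrRes k Sset)) (Λ' : Set Λ)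
    (ℓ : Λ → Fin (k + 1)) (N : Λ → ℕ) (R : Λ → Λ → Prop) : Prop where
  wf : WellFounded R
  rel_of_mem_fullDeps : ∀ η, ∀ ν ∈ fullDeps F η, R ν η
  rel_of_mem_resDeps : ∀ η ∈ Λ', ∀ n ≥ N η, ∀ η', restrictAt η.1 (ℓ η) n ∈ resDeps F η' → R η η'
  rel_of_restrictAt_eq : ∀ η ∈ Λ', ∀ n ≥ N η, ∀ η' ≠ η,
    restrictAt η.1 (ℓ η) n = restrictAt η'.1 (ℓ η) n → R η η'

theorem IsFreeOrder.exists_isEliminationOrder {Λ' : Set Λ} {r : Λ → Λ → Prop}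
    {ℓ : Λ → Fin (k + 1)} (hfree : IsFreeOrder Λ' (fullDeps F) (resDeps F) r ℓ)
    (hwf : WellFounded fun ν η => ν ∈ fullDeps F η) (hclosed : ∀ η ∈ Λ', fullDeps F η ⊆ Λ') :
    ∃ N R, IsEliminationOrder F Λ' ℓ N R := by
  classical
  choose! N hN using fun η hη => Filter.eventually_atTop.1
    ((hfree.eventually_ne η hη).and (hfree.eventually_notMem η hη))
  -- `Λ'` comes first, ordered by `r`; outside `Λ'` the dependencies alone are respected.
  let R (ν η : Λ) : Prop := blockLex (fun η => decide (η ∉ Λ'))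
    (fun outside => bif outside then fun ν η => ν ∈ fullDeps F η else r) ν η
  have hR_outside : ∀ η ∈ Λ', ∀ η' ∉ Λ', R η η' := fun η hη η' hη' => by simp [R, blockLex, *]
  have hR_inside : ∀ η ∈ Λ', ∀ η' ∈ Λ', r η η' → R η η' := fun η hη η' hη' h => by
    simp [R, blockLex, *]
  refine ⟨N, R, ⟨wellFounded_blockLex ?_, ?_, ?_, ?_⟩⟩
  · rintro (_ | _)
    exacts [hfree.isWellOrder.wf, hwf]
  · intro η ν hν
    by_cases hη : η ∈ Λ'
    · exact hR_inside ν (hclosed η hη hν) η hη (hfree.rel_of_mem η hη ν (hclosed η hη hν) hν)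
    · by_cases hνΛ' : ν ∈ Λ'
      · exact hR_outside ν hνΛ' η hη
      · simp [R, blockLex, *]
  · intro η hη n hn η' hmem
    by_cases hη' : η' ∈ Λ'
    · exact hR_inside η hη η' hη' (not_not.1 fun h => (hN η hη n hn).2 η' hη' h hmem)
    · exact hR_outside η hη η' hη'
  · intro η hη n hn η' hne heq
    by_cases hη' : η' ∈ Λ'
    · refine hR_inside η hη η' hη' (not_not.1 fun h => hne ?_)
      exact hfree.isWellOrder.trichotomous η' η (fun h' => (hN η hη n hn).1 η' hη' h' heq) h
    · exact hR_outside η hη η' hη'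

section Pivot

variable {Λ' : Set Λ} {ℓ : Λ → Fin (k + 1)} {N : Λ → ℕ} {R : Λ → Λ → Prop} {i : Λ × ℕ}

theorem of_pivot_eq_X {ρ : LambdaRes Λ} (h : pivot Λ' ℓ N i = .X ρ) :
    i.1 ∈ Λ' ∧ N i.1 ≤ i.2 ∧ ρ = resMem i.1 (ℓ i.1) i.2 := by
  unfold pivot at h
  split_ifs at h with hi hN
  exact ⟨hi, hN, (Gen2.X.inj h).symm⟩

theorem of_pivot_eq_Y (h : pivot Λ' ℓ N i = .Y η n) :
    i.1 = η ∧ (η ∈ Λ' ∧ n < N η ∧ i.2 = n ∨ η ∉ Λ' ∧ i.2 + 1 = n) := by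
  unfold pivot at h
  split_ifs at h with hi hN
  · obtain ⟨rfl, rfl⟩ := Gen2.Y.inj h
    exact ⟨rfl, .inl ⟨hi, not_le.1 hN, rfl⟩⟩
  · obtain ⟨rfl, rfl⟩ := Gen2.Y.inj h
    exact ⟨rfl, .inr ⟨hi, rfl⟩⟩

namespace IsEliminationOrder

theorem rel_of_pivot_mem_depGens (hR : IsEliminationOrder F Λ' ℓ N R)
    (h : pivot Λ' ℓ N i ∈ depGens F η) : R i.1 η := by
  rcases h with ⟨ρ, hρ, hi⟩ | h
  · obtain ⟨hiΛ', hN, rfl⟩ := of_pivot_eq_X hi.symm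
    exact hR.rel_of_mem_resDeps i.1 hiΛ' i.2 hN η hρ
  · obtain ⟨ν, hν, n, hi⟩ := Set.mem_iUnion₂.1 h
    exact (of_pivot_eq_Y hi.symm).1 ▸ hR.rel_of_mem_fullDeps η ν hν

theorem eq_or_rel_of_pivot_eq_X_resMem (hR : IsEliminationOrder F Λ' ℓ N R) {m : Fin (k + 1)}
    (h : pivot Λ' ℓ N i = .X (resMem η m n)) : i = (η, n) ∨ R i.1 η := by
  obtain ⟨hi, hN, heq⟩ := of_pivot_eq_X h
  obtain ⟨rfl, rfl, -⟩ := restrictAt_eq_iff.1 (congrArg Subtype.val heq)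
  rcases eq_or_ne η i.1 with rfl | hne
  · exact .inl rfl
  · exact .inr (hR.rel_of_restrictAt_eq i.1 hi i.2 hN η hne (congrArg Subtype.val heq).symm)

theorem coeff_pivot_eq_zero (hR : IsEliminationOrder F Λ' ℓ N R)
    (hz : z i.1 i.2 ∈ zSpan F i.1 i.2) :
    FreeAbelianGroup.coeff (pivot Λ' ℓ N i) (z i.1 i.2) = 0 :=
  (FreeAbelianGroup.notMem_support_iff _ _).1 fun h =>
    hR.wf.irrefl.irrefl _ (hR.rel_of_pivot_mem_depGens (support_subset_depGens hz h))

open Classical in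
theorem coeff_pivot_relator (hR : IsEliminationOrder F Λ' ℓ N R)
    (hz : z i.1 i.2 ∈ zSpan F i.1 i.2) :
    FreeAbelianGroup.coeff (pivot Λ' ℓ N i) (relator b z i) =
      if i.1 ∈ Λ' then -1 else (i.2.factorial : ℤ) := by
  obtain ⟨η, n⟩ := i
  rw [coeff_relator, hR.coeff_pivot_eq_zero hz]
  unfold pivot
  split_ifs <;> simp_all [resMem_eq_iff]

open Classical in
/-- The rank of the relation with index `(η̄, n)` in the elimination: relations are ordered first by
the tuple `η̄`; the pivot `y_{η̄,n}` of an initial relation of `η̄ ∈ Λ'` is expressed through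
`y_{η̄,n+1}`, so these relations are eliminated from `N η̄` downwards, while for `η̄ ∉ Λ'` the pivot
`y_{η̄,n+1}` is expressed through `y_{η̄,n}`. -/
noncomputable def rank (hR : IsEliminationOrder F Λ' ℓ N R) (i : Λ × ℕ) : Ordinal.{u + 1} ×ₗ ℕ :=
  have : IsWellFounded Λ R := ⟨hR.wf⟩
  toLex (IsWellFounded.rank R i.1, if i.1 ∈ Λ' then N i.1 - i.2 else i.2)

theorem rank_lt_of_rel (hR : IsEliminationOrder F Λ' ℓ N R) {j : Λ × ℕ} (h : R j.1 i.1) :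
    hR.rank j < hR.rank i :=
  have : IsWellFounded Λ R := ⟨hR.wf⟩
  Prod.Lex.toLex_lt_toLex.2 (.inl (IsWellFounded.rank_lt_of_rel h))

theorem eq_or_rank_lt_of_pivot_eq_Y_succ (hR : IsEliminationOrder F Λ' ℓ N R)
    (h : pivot Λ' ℓ N i = .Y η (n + 1)) : i = (η, n) ∨ hR.rank i < hR.rank (η, n) := by
  obtain ⟨rfl, ⟨hη, hN, hn⟩ | ⟨-, hn⟩⟩ := of_pivot_eq_Y h
  · refine .inr (Prod.Lex.toLex_lt_toLex.2 (.inr ⟨rfl, ?_⟩))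
    simp only [if_pos hη]
    lia
  · exact .inl (Prod.ext rfl (Nat.succ_injective hn))

theorem eq_or_rank_lt_of_pivot_eq_Y (hR : IsEliminationOrder F Λ' ℓ N R)
    (h : pivot Λ' ℓ N i = .Y η n) : i = (η, n) ∨ hR.rank i < hR.rank (η, n) := by
  obtain ⟨rfl, ⟨-, -, hn⟩ | ⟨hη, hn⟩⟩ := of_pivot_eq_Y h
  · exact .inl (Prod.ext rfl hn)
  · refine .inr (Prod.Lex.toLex_lt_toLex.2 (.inr ⟨rfl, ?_⟩))
    simp only [if_neg hη]
    lia

theorem isTriangular_relator (hR : IsEliminationOrder F Λ' ℓ N R)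
    (hz : ∀ η n, z η n ∈ zSpan F η n) :
    IsTriangular (fun i => (relator b z i).toFinsupp) (pivot Λ' ℓ N) hR.rank where
  apply_pivot_ne_zero i := by
    refine (hR.coeff_pivot_relator (hz i.1 i.2)).trans_ne ?_
    split_ifs
    exacts [by decide, mod_cast i.2.factorial_ne_zero]
  eq_or_rank_lt := by
    rintro ⟨η, n⟩ j hj
    have hmem : pivot Λ' ℓ N j ∈ (relator b z (η, n)).support :=
      (FreeAbelianGroup.mem_support_iff _ _).2 hj
    obtain hsucc | hself | ⟨m, hres⟩ | hdep := eq_of_mem_support_relator (hz η n) hmem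
    · exact hR.eq_or_rank_lt_of_pivot_eq_Y_succ hsucc
    · exact hR.eq_or_rank_lt_of_pivot_eq_Y hself
    · exact (hR.eq_or_rel_of_pivot_eq_X_resMem hres).imp_right hR.rank_lt_of_rel
    · exact .inr (hR.rank_lt_of_rel (hR.rel_of_pivot_mem_depGens hdep))

end IsEliminationOrder

/-- The generators `x_ν` and those `y_{η̄,n}` with `η̄ ∈ Λ'`. -/
def gensOver (Λ' : Set Λ) : Set (Gen2 k Sset Λ) := {g | ∀ η n, g = .Y η n → η ∈ Λ'}

theorem mem_of_pivot_mem_gensOver (h : pivot Λ' ℓ N i ∈ gensOver Λ') : i.1 ∈ Λ' := by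
  by_contra hi
  exact hi (h i.1 (i.2 + 1) (if_neg hi))

theorem support_relator_subset_gensOver (hz : z η n ∈ zSpan F η n) (hη : η ∈ Λ')
    (hclosed : fullDeps F η ⊆ Λ') : ↑(relator b z (η, n)).support ⊆ gensOver Λ' := by
  rintro _ hg η' n' rfl
  obtain hsucc | hself | ⟨m, hres⟩ | hdep := eq_of_mem_support_relator hz hg
  · exact (Gen2.Y.inj hsucc).1 ▸ hη
  · exact (Gen2.Y.inj hself).1 ▸ hη
  · cases hres
  · obtain ⟨ρ, -, hρ⟩ | hν := hdep
    · cases hρ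
    · obtain ⟨ν, hν, n, hY⟩ := Set.mem_iUnion₂.1 hν
      exact (Gen2.Y.inj hY).1 ▸ hclosed hν

theorem IsEliminationOrder.free_addSubgroup (hR : IsEliminationOrder F Λ' ℓ N R)
    (hz : ∀ η n, z η n ∈ zSpan F η n) (hclosed : ∀ η ∈ Λ', fullDeps F η ⊆ Λ')
    {H : AddSubgroup (FreeAbelianGroup (Gen2 k Sset Λ) ⧸ relSub2 b z)}
    (hH : ∀ h ∈ H, ∃ a : FreeAbelianGroup (Gen2 k Sset Λ),
      ↑a.support ⊆ gensOver Λ' ∧ QuotientAddGroup.mk a = h) : Module.Free ℤ H := by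
  revert H
  rw [relSub2_eq_closure_range_relator]
  intro H hH
  refine free_addSubgroup_of_isTriangular (hR.isTriangular_relator hz) ?_ ?_ hH
  · intro i hi
    rw [hR.coeff_pivot_relator (hz i.1 i.2), if_pos (mem_of_pivot_mem_gensOver hi)]
    exact isUnit_one.neg
  · exact fun i hi => support_relator_subset_gensOver (hz i.1 i.2) (mem_of_pivot_mem_gensOver hi)
      (hclosed i.1 (mem_of_pivot_mem_gensOver hi))

end Pivot

theorem Regressive.exists_closed_of_mk_le (hreg : Regressive Λ F) {κ : Cardinal} (hκ : ℵ₀ ≤ κ)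
    {A : Set Λ} (hA : #A ≤ κ) :
    ∃ Λ' ⊇ A, #Λ' ≤ κ ∧ ∀ η ∈ Λ', fullDeps F η ⊆ Λ' :=
  ⟨depClosure (fun η (_ : Unit) => η) (fullDeps F) A, subset_depClosure,
    mk_depClosure_le hκ (fun _ _ h => congrFun h ()) (fun η => countable_fullDeps (hreg.1 η)) hA,
    fun _ hη => deps_subset_depClosure fun _ => hη⟩

theorem exists_representatives_gensOver {K : AddSubgroup (FreeAbelianGroup (Gen2 k Sset Λ))}
    {κ : Cardinal} (hκ : ℵ₀ ≤ κ) {H : Set (FreeAbelianGroup (Gen2 k Sset Λ) ⧸ K)} (hH : #H ≤ κ) :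
    ∃ A : Set Λ, #A ≤ κ ∧ ∀ h ∈ H, ∃ a : FreeAbelianGroup (Gen2 k Sset Λ),
      ↑a.support ⊆ gensOver A ∧ QuotientAddGroup.mk a = h := by
  choose a ha using QuotientAddGroup.mk_surjective (s := K)
  have hfin : ∀ h, {η | ∃ n, Gen2.Y η n ∈ (a h).support}.Finite := fun h => by
    have hinj : Function.Injective (Function.uncurry (Gen2.Y (Λ := Λ))) :=
      fun _ _ h => Prod.ext_iff.2 (Gen2.Y.inj h)
    refine (((a h).support.finite_toSet.preimage hinj.injOn).image Prod.fst).subset ?_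
    exact fun η ⟨n, hn⟩ => ⟨(η, n), hn, rfl⟩
  refine ⟨⋃ h ∈ H, {η | ∃ n, Gen2.Y η n ∈ (a h).support},
    mk_biUnion_le_of_le hκ hH fun h _ => (hfin h).countable.le_aleph0.trans hκ, ?_⟩
  rintro h hh
  refine ⟨a h, ?_, ha h⟩
  rintro _ hg η n rfl
  exact Set.mem_biUnion hh ⟨n, hg⟩

end Presentation

end Sh883

open Sh883 in
/-- Let `x = (Sset, Λ)` be a combinatorial `k`-parameter with `Sset` a
set of ordinals, `F` a regressive function on `x` which is finitary or simple,
`b : Λ × ℕ → ℤ`, and for `η̄ ∈ Λ`, `n ∈ ℕ` let `z_{η̄,n}` be a ℤ-linear combination of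
generators `x_{ν̄}` (`ν̄ ∈ F(η̄) ∖ Λ`) and `y_{ν̄,n}` (`ν̄ ∈ F(η̄) ∩ Λ` with
`ν̄↾⟨m,n⟩ ∈ F(η̄)` for all `m ≤ k`).  Then the abelian group presented by the generators
`x_ν, y_{η̄,n}` and the relations
`n!·y_{η̄,n+1} = y_{η̄,n} + b(η̄,n)·z_{η̄,n} + Σ_{m≤k} x_{η̄↾⟨m,n⟩}` is `ℵ_{k+1}`-free. -/
theorem stmt17 (k : ℕ) (Sset : Set Ordinal.{u}) (Λ : Set (Fin (k + 1) → ℕ → ↥Sset))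
    (F : ↥Λ → Set (FullOrRes k Sset)) (hreg : Regressive Λ F)
    (hfs : Finitary F ∨ Simple F)
    (b : ↥Λ → ℕ → ℤ) (z : ↥Λ → ℕ → FreeAbelianGroup (Gen2 k Sset Λ))
    (hz : ∀ (η : ↥Λ) (n : ℕ), z η n ∈ zSpan F η n) :
    ∀ H : AddSubgroup (FreeAbelianGroup (Gen2 k Sset Λ) ⧸ relSub2 b z),
      #H < Cardinal.aleph (k + 1) → Module.Free ℤ H := by
  intro H hH
  have hk : ℵ₀ ≤ ℵ_ (k : Ordinal) := aleph0_le_aleph _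
  have hH' : #(H : Set (FreeAbelianGroup (Gen2 k Sset Λ) ⧸ relSub2 b z)) ≤ ℵ_ (k : Ordinal) := by
    rw [← Order.lt_succ_iff, succ_aleph]
    exact hH
  obtain ⟨A, hA, hrep⟩ := exists_representatives_gensOver hk hH'
  obtain ⟨Λ', hAΛ', hΛ', hclosed⟩ := hreg.exists_closed_of_mk_le hk hA
  obtain ⟨r, ℓ, hfree⟩ := hreg.exists_isFreeOrder hfs hΛ'
  obtain ⟨N, R, hR⟩ := hfree.exists_isEliminationOrder hreg.wellFounded_fullDeps hclosed
  refine hR.free_addSubgroup hz hclosed fun h hh => ?_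
  obtain ⟨a, ha, rfl⟩ := hrep h hh
  exact ⟨a, fun g hg η n hY => hAΛ' (ha hg η n hY), rfl⟩
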